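/- Let n ≥ 4 and let Q be any quiver (i.e., any orientation of the edges) whose underlying graph is the extended Dynkin diagram D̃_n: vertex set {0,1,…,n} with edges {0,2}, {1,2}, {i,i+1} for 2 ≤ i ≤ n−3, {n−2,n−1} and {n−2,n}. Then for every vertex i of Q the frieze sequence (X^i_j)_{j≥0} satisfies a linear recurrence over the field ℚ(x_0,…,x_n). -/

import Mathlib

/-- The (ordered) edge description of the extended Dynkin diagram D̃_n on vertices
`{0,…,n}` : edges `{0,2}`, `{1,2}`, `{i,i+1}` for `2 ≤ i ≤ n−3`, `{n−2,n−1}`, `{n−2,n}`. -/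
def dTildeEdge (n a b : ℕ) : Prop :=
  (a = 0 ∧ b = 2) ∨ (a = 1 ∧ b = 2) ∨ (2 ≤ a ∧ a ≤ n - 3 ∧ b = a + 1) ∨
  (a = n - 2 ∧ b = n - 1) ∨ (a = n - 2 ∧ b = n)

/-!
Delaying some of the sequences turns arrows around, and since `D̃_n` is a tree suitable delays make
all arrows point upwards along a height function in which the ends of each edge differ by one. Take
the product of the two leaf sequences at each end of the diagram; together with the inner sequences
these products form a strip of an `SL₂`-tiling. At a fork the leaf sequences satisfy
`p (s + 2) + p s = e s * q (s + 1)`, and symmetrically, and the coefficient `e` governs a three-term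
linear relation that propagates along both diagonals of the tiling. Reaching the other fork along
either diagonal forces `e` to have period `n - 2`, so the leaf sequences satisfy linear recurrences.
All the others are obtained from these by products, shifts, differences and multiplication by
periodic sequences. No division by zero occurs, because the sequences are subtraction-free in the
initial variables.
-/

section RecurrentSequences

variable {R : Type*} [CommRing R]

/-- The shift operator on sequences. It is an algebra homomorphism for the pointwise product, which
is what makes recurrent sequences closed under products. -/
def seqShift (R : Type*) [CommRing R] : (ℕ → R) →ₐ[R] (ℕ → R) :=
  AlgHom.pi fun j => Pi.evalAlgHom R _ (j + 1)

theorem seqShift_pow_apply (i : ℕ) (a : ℕ → R) (j : ℕ) :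
    ((seqShift R).toLinearMap ^ i) a j = a (j + i) := by
  induction i generalizing a with
  | zero => rfl
  | succ i ih =>
    rw [pow_succ, Module.End.mul_apply, ih]
    rfl

/-- A linearly recurrent sequence, encoded by a finitely generated shift-invariant module of
sequences containing it; `IsRecurrent.exists_isSolution` extracts an explicit recurrence. -/
def IsRecurrent (a : ℕ → R) : Prop :=
  ∃ W : Submodule R (ℕ → R), W.FG ∧ W.map (seqShift R).toLinearMap ≤ W ∧ a ∈ W

namespace IsRecurrent

variable {a b : ℕ → R}

theorem exists_monic_aeval_seqShift_eq_zero (ha : IsRecurrent a) :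
    ∃ P : Polynomial R, P.Monic ∧ Polynomial.aeval (seqShift R).toLinearMap P a = 0 := by
  obtain ⟨W, hfg, hW, haW⟩ := ha
  have hmaps : ∀ x ∈ W, (seqShift R).toLinearMap x ∈ W := Submodule.map_le_iff_le_comap.mp hW
  have : Module.Finite R W := Module.Finite.iff_fg.mpr hfg
  obtain ⟨P, hP, hP0⟩ :=
    LinearMap.exists_monic_and_aeval_eq_zero R ((seqShift R).toLinearMap.restrict hmaps)
  refine ⟨P, hP, ?_⟩
  have h := congrArg Subtype.val (LinearMap.congr_fun hP0 ⟨a, haW⟩)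
  simp only [Polynomial.aeval_eq_sum_range, Module.End.pow_restrict _ hmaps] at h ⊢
  simpa [LinearMap.sum_apply] using h

theorem exists_isSolution [Nontrivial R] (ha : IsRecurrent a) :
    ∃ E : LinearRecurrence R, 1 ≤ E.order ∧ E.IsSolution a := by
  obtain ⟨P, hP, hPa⟩ := ha.exists_monic_aeval_seqShift_eq_zero
  -- The factor `X` only serves to make the order positive.
  have hXP : (Polynomial.X * P).Monic := Polynomial.monic_X.mul hP
  have hXPa : Polynomial.aeval (seqShift R).toLinearMap (Polynomial.X * P) a = 0 := by
    rw [map_mul, Module.End.mul_apply, hPa, map_zero]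
  refine ⟨⟨(Polynomial.X * P).natDegree, fun t => -(Polynomial.X * P).coeff t⟩, ?_, fun j => ?_⟩
  · simp [Polynomial.natDegree_X_mul hP.ne_zero]
  · have hsum := congrFun hXPa j
    rw [Polynomial.aeval_eq_sum_range, Finset.sum_range_succ, hXP.coeff_natDegree, one_smul,
      LinearMap.add_apply, Pi.add_apply, seqShift_pow_apply, add_comm] at hsum
    rw [eq_neg_of_add_eq_zero_left hsum, Finset.sum_range]
    simp [LinearMap.sum_apply, seqShift_pow_apply]

theorem add (ha : IsRecurrent a) (hb : IsRecurrent b) : IsRecurrent (a + b) := by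
  obtain ⟨V, hV, hV', haV⟩ := ha
  obtain ⟨W, hW, hW', hbW⟩ := hb
  refine ⟨V ⊔ W, hV.sup hW, ?_, Submodule.add_mem_sup haV hbW⟩
  rw [Submodule.map_sup]
  exact sup_le_sup hV' hW'

theorem mul (ha : IsRecurrent a) (hb : IsRecurrent b) : IsRecurrent (a * b) := by
  obtain ⟨V, hV, hV', haV⟩ := ha
  obtain ⟨W, hW, hW', hbW⟩ := hb
  refine ⟨V * W, hV.mul hW, ?_, Submodule.mul_mem_mul haV hbW⟩
  rw [Submodule.map_mul]
  exact mul_le_mul' hV' hW'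

theorem neg (ha : IsRecurrent a) : IsRecurrent (-a) :=
  let ⟨W, hW, hW', haW⟩ := ha
  ⟨W, hW, hW', W.neg_mem haW⟩

theorem sub (ha : IsRecurrent a) (hb : IsRecurrent b) : IsRecurrent (a - b) :=
  sub_eq_add_neg a b ▸ ha.add hb.neg

theorem shift (ha : IsRecurrent a) : IsRecurrent (seqShift R a) :=
  let ⟨W, hW, hW', haW⟩ := ha
  ⟨W, hW, hW', hW' (Submodule.mem_map_of_mem haW)⟩

theorem of_shift (ha : IsRecurrent (seqShift R a)) : IsRecurrent a := by
  obtain ⟨W, hW, hW', haW⟩ := ha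
  refine ⟨W ⊔ R ∙ a, hW.sup (Submodule.fg_span_singleton a), ?_,
    Submodule.mem_sup_right (Submodule.mem_span_singleton_self a)⟩
  rw [Submodule.map_sup, Submodule.map_span, Set.image_singleton]
  exact sup_le (hW'.trans le_sup_left)
    ((Submodule.span_singleton_le_iff_mem _ _).mpr (Submodule.mem_sup_left haW))

theorem of_comp_add {k : ℕ} (ha : IsRecurrent fun j => a (j + k)) : IsRecurrent a := by
  induction k with
  | zero => exact ha
  | succ k ih =>
    refine ih (of_shift ?_)
    convert ha using 2 with j
    exact congrArg a (by ring)

end IsRecurrent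

/-- The algebra of sequences of period `N`. -/
def periodicSeq (R : Type*) [CommRing R] (N : ℕ) : Subalgebra R (ℕ → R) where
  carrier := {a | Function.Periodic a N}
  add_mem' ha hb := ha.add hb
  mul_mem' ha hb := ha.mul hb
  algebraMap_mem' _ _ := rfl

theorem periodicSeq_fg {N : ℕ} (hN : 0 < N) :
    (Subalgebra.toSubmodule (periodicSeq R N)).FG := by
  let unroll : (Fin N → R) →ₗ[R] (ℕ → R) :=
    LinearMap.funLeft R R fun j => (⟨j % N, Nat.mod_lt j hN⟩ : Fin N)
  have hrange : LinearMap.range unroll = Subalgebra.toSubmodule (periodicSeq R N) := by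
    refine le_antisymm ?_ fun a ha => ⟨fun i => a i, funext ha.map_mod_nat⟩
    rintro _ ⟨c, rfl⟩ j
    simp [unroll, LinearMap.funLeft_apply]
  rw [← hrange, LinearMap.range_eq_map]
  exact Module.Finite.fg_top.map unroll

theorem map_seqShift_periodicSeq_le (N : ℕ) :
    (Subalgebra.toSubmodule (periodicSeq R N)).map (seqShift R).toLinearMap ≤
      Subalgebra.toSubmodule (periodicSeq R N) := by
  rintro _ ⟨a, ha, rfl⟩ j
  exact (congrArg a (by ring)).trans (ha (j + 1))

theorem isRecurrent_of_periodic {N : ℕ} (hN : 0 < N) {a : ℕ → R} (ha : Function.Periodic a N) :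
    IsRecurrent a :=
  ⟨_, periodicSeq_fg hN, map_seqShift_periodicSeq_le N, ha⟩

theorem le_periodicSeq_mul (N : ℕ) (U : Submodule R (ℕ → R)) :
    U ≤ Subalgebra.toSubmodule (periodicSeq R N) * U :=
  le_mul_of_one_le_left' (Submodule.one_le.mpr (one_mem (periodicSeq R N)))

theorem isRecurrent_of_mem_of_map_seqShift_le {N : ℕ} (hN : 0 < N) {U : Submodule R (ℕ → R)}
    (hfg : U.FG)
    (hU : U.map (seqShift R).toLinearMap ≤ Subalgebra.toSubmodule (periodicSeq R N) * U)
    {a : ℕ → R} (ha : a ∈ U) : IsRecurrent a := by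
  refine ⟨Subalgebra.toSubmodule (periodicSeq R N) * U, (periodicSeq_fg hN).mul hfg, ?_,
    le_periodicSeq_mul N U ha⟩
  rw [Submodule.map_mul]
  refine (mul_le_mul' (map_seqShift_periodicSeq_le N) hU).trans_eq ?_
  rw [← mul_assoc, (Subalgebra.isIdempotentElem_toSubmodule _).eq]

theorem isRecurrent_of_coupled {N : ℕ} (hN : 0 < N) {e p q : ℕ → R} (he : Function.Periodic e N)
    (hp : ∀ j, p (j + 2) + p j = e j * q (j + 1)) (hq : ∀ j, q (j + 2) + q j = e j * p (j + 1)) :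
    IsRecurrent p := by
  set S := seqShift R
  let U := Submodule.span R ({p, q, S p, S q} : Set (ℕ → R))
  have hpU : p ∈ U := Submodule.subset_span (by simp)
  have hqU : q ∈ U := Submodule.subset_span (by simp)
  have hSpU : S p ∈ U := Submodule.subset_span (by simp)
  have hSqU : S q ∈ U := Submodule.subset_span (by simp)
  have hSSp : S (S p) = e * S q - p := funext fun j => eq_sub_of_add_eq (hp j)
  have hSSq : S (S q) = e * S p - q := funext fun j => eq_sub_of_add_eq (hq j)
  refine isRecurrent_of_mem_of_map_seqShift_le hN (Submodule.fg_span (by simp)) ?_ hpU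
  rw [Submodule.map_span, Submodule.span_le]
  have hle := le_periodicSeq_mul N U
  rintro _ ⟨a, rfl | rfl | rfl | rfl, rfl⟩
  · exact hle hSpU
  · exact hle hSqU
  · exact hSSp ▸ sub_mem (Submodule.mul_mem_mul he hSqU) (hle hpU)
  · exact hSSq ▸ sub_mem (Submodule.mul_mem_mul he hSpU) (hle hqU)

end RecurrentSequences

section Fork

variable {F : Type*} [Field F] {p q A C : ℕ → F}

/-- The frieze relations around a fork: `p` and `q` are the sequences at the two leaves, `A` is the
one at the vertex they are attached to, and `C` is the contribution of the rest of the diagram to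
the relation at that vertex. -/
structure IsFork (p q A C : ℕ → F) : Prop where
  left_ne_zero : ∀ s, p s ≠ 0
  right_ne_zero : ∀ s, q s ≠ 0
  left_mul : ∀ s, p (s + 1) * p s = 1 + A s
  right_mul : ∀ s, q (s + 1) * q s = 1 + A s
  center_mul : ∀ s, A (s + 1) * A s = 1 + p (s + 1) * q (s + 1) * C s

/-- The coefficient of the linear relation `p (s + 2) + p s = e s * q (s + 1)` between the two
leaves of a fork; it turns out to be symmetric in `p` and `q`. -/
def forkCoeff (p q : ℕ → F) (s : ℕ) : F := (p (s + 2) + p s) / q (s + 1)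

namespace IsFork

theorem left_add (h : IsFork p q A C) (s : ℕ) :
    p (s + 2) + p s = forkCoeff p q s * q (s + 1) :=
  (div_mul_cancel₀ _ (h.right_ne_zero _)).symm

theorem right_add (h : IsFork p q A C) (s : ℕ) :
    q (s + 2) + q s = forkCoeff p q s * p (s + 1) := by
  rw [forkCoeff, div_mul_eq_mul_div, eq_div_iff (h.right_ne_zero _)]
  linear_combination h.right_mul s + h.right_mul (s + 1) - h.left_mul s - h.left_mul (s + 1)

theorem rest_add_mul (h : IsFork p q A C) (s : ℕ) :
    C s + p s * q s = forkCoeff p q s * A s := by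
  apply mul_left_cancel₀ (mul_ne_zero (h.left_ne_zero (s + 1)) (h.right_ne_zero (s + 1)))
  linear_combination -h.center_mul s + q (s + 1) * q s * h.left_mul s
    + (1 + A s) * h.right_mul s - A s * h.left_mul (s + 1) - A s * h.left_mul s
    + A s * p (s + 1) * h.left_add s

theorem mul_add_rest (h : IsFork p q A C) (s : ℕ) :
    p (s + 2) * q (s + 2) + C s = forkCoeff p q s * A (s + 1) := by
  apply mul_left_cancel₀ (mul_ne_zero (h.left_ne_zero (s + 1)) (h.right_ne_zero (s + 1)))
  linear_combination -h.center_mul s + q (s + 2) * q (s + 1) * h.left_mul (s + 1)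
    + (1 + A (s + 1)) * h.right_mul (s + 1) - A (s + 1) * h.left_mul (s + 1)
    - A (s + 1) * h.left_mul s + A (s + 1) * p (s + 1) * h.left_add s

theorem isRecurrent_left (h : IsFork p q A C) {N : ℕ} (hN : 0 < N)
    (hper : Function.Periodic (forkCoeff p q) N) : IsRecurrent p :=
  isRecurrent_of_coupled hN hper h.left_add h.right_add

theorem isRecurrent_right (h : IsFork p q A C) {N : ℕ} (hN : 0 < N)
    (hper : Function.Periodic (forkCoeff p q) N) : IsRecurrent q :=
  isRecurrent_of_coupled hN hper h.right_add h.left_add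

theorem isRecurrent_center (h : IsFork p q A C) (hp : IsRecurrent p) : IsRecurrent A := by
  have hA : A = seqShift F p * p - 1 :=
    funext fun s => eq_sub_of_add_eq' (h.left_mul s).symm
  rw [hA]
  exact (hp.shift.mul hp).sub (isRecurrent_of_periodic one_pos fun _ => rfl)

end IsFork

end Fork

section Tiling

variable {F : Type*} [Field F] {m : ℕ} {a : ℕ → ℕ → F} {c : ℕ → F}

/-- A strip of an `SL₂`-tiling: the rows `a 0, …, a (m + 1)` satisfy the frieze relations of a
linearly oriented chain whose inner vertices are `1, …, m`. -/
structure IsTiling (m : ℕ) (a : ℕ → ℕ → F) : Prop where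
  ne_zero : ∀ k s, 1 ≤ k → k ≤ m → a k s ≠ 0
  mul_eq : ∀ k s, k < m → a (k + 1) (s + 1) * a (k + 1) s = 1 + a k (s + 1) * a (k + 2) s

namespace IsTiling

-- In coordinates `(s, s + k)` this says that a linear relation between three consecutive columns
-- of the tiling is the same in every row; `add_eq_mul_of_column` exchanges rows and columns.
theorem add_eq_mul_of_row (ha : IsTiling m a) (hc : ∀ s, a 2 s + a 0 s = c s * a 1 s)
    {k : ℕ} (hk : k < m) (s : ℕ) : a (k + 2) s + a k s = c (s + k) * a (k + 1) s := by
  induction k generalizing s with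
  | zero => exact hc s
  | succ k ih =>
    have hprev : a (k + 2) (s + 1) + a k (s + 1) = c (s + (k + 1)) * a (k + 1) (s + 1) := by
      rw [show s + (k + 1) = s + 1 + k by ring]
      exact ih (by omega) (s + 1)
    apply mul_left_cancel₀ (ha.ne_zero (k + 1) (s + 1) (by omega) (by omega))
    linear_combination a (k + 2) s * hprev + ha.mul_eq k s (by omega) - ha.mul_eq (k + 1) s hk

theorem add_eq_mul_of_column (ha : IsTiling m a)
    (hc : ∀ s, a 0 (s + 2) + a 2 s = c s * a 1 (s + 1)) {k : ℕ} (hk : k < m) (s : ℕ) :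
    a k (s + 2) + a (k + 2) s = c s * a (k + 1) (s + 1) := by
  induction k with
  | zero => exact hc s
  | succ k ih =>
    apply mul_left_cancel₀ (ha.ne_zero (k + 1) (s + 1) (by omega) (by omega))
    linear_combination a (k + 2) (s + 1) * ih (by omega) + ha.mul_eq k (s + 1) (by omega)
      - ha.mul_eq (k + 1) s hk

theorem isRecurrent (ha : IsTiling m a) (hc : ∀ s, a 2 s + a 0 s = c s * a 1 s)
    {N : ℕ} (hN : 0 < N) (hper : Function.Periodic c N)
    (h0 : IsRecurrent (a 0)) (h1 : IsRecurrent (a 1)) {k : ℕ} (hk : k ≤ m) :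
    IsRecurrent (a k) ∧ IsRecurrent (a (k + 1)) := by
  induction k with
  | zero => exact ⟨h0, h1⟩
  | succ k ih =>
    obtain ⟨hprev, hcur⟩ := ih (by omega)
    have hcoeff : IsRecurrent fun s => c (s + k) :=
      isRecurrent_of_periodic hN fun s => by rw [add_right_comm, hper]
    have hnext : a (k + 2) = (fun s => c (s + k)) * a (k + 1) - a k :=
      funext fun s => eq_sub_of_add_eq (ha.add_eq_mul_of_row hc hk s)
    exact ⟨hcur, hnext ▸ (hcoeff.mul hcur).sub hprev⟩

end IsTiling

end Tiling

section Strip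

variable {F : Type*} [Field F]

/-- The frieze relations of the diagram `D̃_{l + 4}` in the linear orientation: a tiling whose two
boundary rows are the products of the leaf sequences of a fork. The fork at the top reads the tiling
along the other diagonal, whence the shifts in `s`. -/
structure IsDTildeStrip (l : ℕ) (p q p' q' : ℕ → F) (a : ℕ → ℕ → F) : Prop where
  tiling : IsTiling (l + 1) a
  bottom : a 0 = p * q
  top : a (l + 2) = p' * q'
  bottom_fork : IsFork p q (a 1) (a 2)
  top_fork : IsFork p' q' (fun s => a (l + 1) (s + 1)) (fun s => a l (s + 2))

namespace IsDTildeStrip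

variable {l : ℕ} {p q p' q' : ℕ → F} {a : ℕ → ℕ → F}

theorem row_zero_add (h : IsDTildeStrip l p q p' q' a) (s : ℕ) :
    a 2 s + a 0 s = forkCoeff p q s * a 1 s := by
  simpa [h.bottom] using h.bottom_fork.rest_add_mul s

theorem column_zero_add (h : IsDTildeStrip l p q p' q' a) (s : ℕ) :
    a 0 (s + 2) + a 2 s = forkCoeff p q s * a 1 (s + 1) := by
  simpa [h.bottom] using h.bottom_fork.mul_add_rest s

theorem forkCoeff_top (h : IsDTildeStrip l p q p' q' a) : forkCoeff p' q' = forkCoeff p q := by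
  funext s
  apply mul_right_cancel₀ (h.tiling.ne_zero (l + 1) (s + 1) (by omega) le_rfl)
  calc forkCoeff p' q' s * a (l + 1) (s + 1) = a l (s + 2) + a (l + 2) s := by
        simpa [h.top] using (h.top_fork.rest_add_mul s).symm
    _ = forkCoeff p q s * a (l + 1) (s + 1) :=
        h.tiling.add_eq_mul_of_column h.column_zero_add l.lt_succ_self s

-- Propagating the coefficient of the bottom fork along both diagonals to the top fork identifies
-- that of the latter with `forkCoeff p q s` and with `forkCoeff p q (s + (l + 2))`.
theorem forkCoeff_periodic (h : IsDTildeStrip l p q p' q' a) :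
    Function.Periodic (forkCoeff p q) (l + 2) := by
  intro s
  apply mul_right_cancel₀ (h.tiling.ne_zero (l + 1) (s + 2) (by omega) le_rfl)
  calc forkCoeff p q (s + (l + 2)) * a (l + 1) (s + 2) = a (l + 2) (s + 2) + a l (s + 2) := by
        rw [h.tiling.add_eq_mul_of_row h.row_zero_add l.lt_succ_self, add_assoc s 2 l, add_comm l 2]
    _ = forkCoeff p q s * a (l + 1) (s + 2) := by
        rw [← h.forkCoeff_top]
        simpa [h.top] using h.top_fork.mul_add_rest s

theorem isRecurrent_bottom_left (h : IsDTildeStrip l p q p' q' a) : IsRecurrent p :=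
  h.bottom_fork.isRecurrent_left (by omega) h.forkCoeff_periodic

theorem isRecurrent_bottom_right (h : IsDTildeStrip l p q p' q' a) : IsRecurrent q :=
  h.bottom_fork.isRecurrent_right (by omega) h.forkCoeff_periodic

theorem isRecurrent_top_left (h : IsDTildeStrip l p q p' q' a) : IsRecurrent p' :=
  h.top_fork.isRecurrent_left (by omega) (h.forkCoeff_top ▸ h.forkCoeff_periodic)

theorem isRecurrent_top_right (h : IsDTildeStrip l p q p' q' a) : IsRecurrent q' :=
  h.top_fork.isRecurrent_right (by omega) (h.forkCoeff_top ▸ h.forkCoeff_periodic)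

theorem isRecurrent_row (h : IsDTildeStrip l p q p' q' a) {k : ℕ} (hk : k ≤ l + 1) :
    IsRecurrent (a k) :=
  have hp := h.isRecurrent_bottom_left
  (h.tiling.isRecurrent h.row_zero_add (by omega) h.forkCoeff_periodic
    (h.bottom ▸ hp.mul h.isRecurrent_bottom_right) (h.bottom_fork.isRecurrent_center hp) hk).1

end IsDTildeStrip

end Strip

section Positivity

variable {R S : Type*} [CommRing R] [CommRing S] [PartialOrder S] [IsStrictOrderedRing S]

/-- The fractions, in an `R`-algebra `K`, of elements of `R` on which `φ` is positive: a
subtraction-free part of `K`. -/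
def positiveFractions (K : Type*) [CommRing K] [Algebra R K] (φ : R →+* S) : Submonoid K where
  carrier := {f | ∃ p q, 0 < φ p ∧ 0 < φ q ∧ f * algebraMap R K q = algebraMap R K p}
  one_mem' := ⟨1, 1, by simp, by simp, by simp⟩
  mul_mem' := by
    rintro f g ⟨p, q, hp, hq, h⟩ ⟨p', q', hp', hq', h'⟩
    refine ⟨p * p', q * q', by simpa using mul_pos hp hp', by simpa using mul_pos hq hq', ?_⟩
    rw [map_mul, map_mul, ← h, ← h']
    ring

namespace positiveFractions

variable {K : Type*} [CommRing K] [Algebra R K] {φ : R →+* S} {f g : K}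

theorem algebraMap_mem {p : R} (hp : 0 < φ p) : algebraMap R K p ∈ positiveFractions K φ :=
  ⟨p, 1, hp, by simp, by simp⟩

theorem add_mem (hf : f ∈ positiveFractions K φ) (hg : g ∈ positiveFractions K φ) :
    f + g ∈ positiveFractions K φ := by
  obtain ⟨p, q, hp, hq, h⟩ := hf
  obtain ⟨p', q', hp', hq', h'⟩ := hg
  refine ⟨p * q' + p' * q, q * q', ?_, by simpa using mul_pos hq hq', ?_⟩
  · simpa using add_pos (mul_pos hp hq') (mul_pos hp' hq)
  · simp only [map_add, map_mul, ← h, ← h']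
    ring

theorem ne_zero [FaithfulSMul R K] (hf : f ∈ positiveFractions K φ) : f ≠ 0 := by
  rintro rfl
  obtain ⟨p, q, hp, -, h⟩ := hf
  rw [zero_mul, eq_comm, FaithfulSMul.algebraMap_eq_zero_iff] at h
  simp [h] at hp

theorem mem_of_mul_mem (hfg : f * g ∈ positiveFractions K φ) (hg : g ∈ positiveFractions K φ) :
    f ∈ positiveFractions K φ := by
  obtain ⟨p, q, hp, hq, h⟩ := hfg
  obtain ⟨p', q', hp', hq', h'⟩ := hg
  refine ⟨p * q', q * p', by simpa using mul_pos hp hq', by simpa using mul_pos hq hp', ?_⟩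
  rw [map_mul, map_mul, ← h, ← h']
  ring

end positiveFractions

end Positivity

section Frieze

variable {V : Type*}

/-- The sequences `X v`, one for each vertex, satisfy the frieze relations of the quiver with
`mult u v` arrows from `u` to `v`. -/
def IsFrieze [Fintype V] {R : Type*} [CommSemiring R] (mult : V → V → ℕ) (X : V → ℕ → R) : Prop :=
  ∀ v j, X v (j + 1) * X v j = 1 + (∏ s, X s (j + 1) ^ mult s v) * ∏ d, X d j ^ mult v d

theorem IsFrieze.mem_positiveFractions [Fintype V] {R S K : Type*} [CommRing R] [CommRing S]
    [PartialOrder S] [IsStrictOrderedRing S] [CommRing K] [Algebra R K] {φ : R →+* S}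
    {mult : V → V → ℕ} {X : V → ℕ → K} (hX : IsFrieze mult X)
    (hacyclic : WellFounded fun u v => mult u v ≠ 0)
    (hX0 : ∀ v, X v 0 ∈ positiveFractions K φ) (v : V) (j : ℕ) :
    X v j ∈ positiveFractions K φ := by
  induction j generalizing v with
  | zero => exact hX0 v
  | succ j ihj =>
    induction v using hacyclic.induction with
    | _ v ihv =>
      refine positiveFractions.mem_of_mul_mem (hX v j ▸ ?_) (ihj v)
      refine positiveFractions.add_mem (one_mem _)
        (mul_mem (prod_mem fun s _ => ?_) (prod_mem fun d _ => pow_mem (ihj d) _))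
      by_cases h : mult s v = 0
      · simp [h]
      · exact pow_mem (ihv s h) _

/-- `mult` is an orientation of the graph on `V` in which two vertices are adjacent if and only if
their heights differ by one. -/
structure IsGradedOrientation (height : V → ℕ) (mult : V → V → ℕ) : Prop where
  add_eq_one : ∀ u v, height v = height u + 1 → mult u v + mult v u = 1
  eq_zero : ∀ u v, height v ≠ height u + 1 → height u ≠ height v + 1 → mult u v = 0

/-- The quiver with one arrow `u → v` whenever `v` is one higher than `u`. -/
def gradedQuiver (height : V → ℕ) (u v : V) : ℕ := if height v = height u + 1 then 1 else 0

/-- Delays of the sequences of a frieze that turn the orientation `mult` into `gradedQuiver`: a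
delay by one is needed across each arrow pointing down. -/
def IsDelay (height : V → ℕ) (mult : V → V → ℕ) (delay : V → ℕ) : Prop :=
  ∀ u v, height v = height u + 1 → delay v = delay u + mult v u

variable {height delay : V → ℕ} {mult : V → V → ℕ}

-- Along every arrow, `height - 2 * delay` increases by one.
theorem IsGradedOrientation.wellFounded [Finite V] (hmult : IsGradedOrientation height mult)
    (hdelay : IsDelay height mult delay) : WellFounded fun u v => mult u v ≠ 0 := by
  let rank : V → ℤ := fun v => height v - 2 * delay v
  have hrank : ∀ u v, mult u v ≠ 0 → rank u < rank v := by
    intro u v huv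
    by_cases hup : height v = height u + 1
    · grind [hmult.add_eq_one u v hup, hdelay u v hup]
    · by_cases hdown : height u = height v + 1
      · grind [hmult.add_eq_one v u hdown, hdelay v u hdown]
      · exact absurd (hmult.eq_zero u v hup hdown) huv
  have : IsTrans V (InvImage (· < ·) rank) := ⟨fun _ _ _ => lt_trans⟩
  have : Std.Irrefl (InvImage (· < ·) rank) := ⟨fun _ => lt_irrefl _⟩
  exact (Finite.wellFounded_of_trans_of_irrefl (InvImage (· < ·) rank)).mono hrank

theorem succ_pow_mul_pow {M : Type*} [Monoid M] (a : ℕ → M) {k l : ℕ} (hkl : k + l = 1) (j : ℕ) :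
    a (j + 1) ^ k * a j ^ l = a (j + k) := by
  obtain ⟨rfl, rfl⟩ | ⟨rfl, rfl⟩ := Nat.add_eq_one_iff.mp hkl <;> simp

variable [Fintype V] {R : Type*} [CommSemiring R]

theorem IsFrieze.comp_delay {X : V → ℕ → R} (hX : IsFrieze mult X)
    (hmult : IsGradedOrientation height mult) (hdelay : IsDelay height mult delay) :
    IsFrieze (gradedQuiver height) fun v j => X v (j + delay v) := by
  intro v j
  beta_reduce
  rw [show j + 1 + delay v = j + delay v + 1 by ring, hX, ← Finset.prod_mul_distrib,
    ← Finset.prod_mul_distrib]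
  congr 1
  refine Finset.prod_congr rfl fun w _ => ?_
  by_cases hbelow : height v = height w + 1
  · have hcount := hmult.add_eq_one w v hbelow
    have hnot : height w ≠ height v + 1 := by omega
    rw [succ_pow_mul_pow _ hcount, hdelay w v hbelow]
    simp only [gradedQuiver, if_pos hbelow, if_neg hnot, pow_one, pow_zero, mul_one]
    congr 1
    omega
  · by_cases habove : height w = height v + 1
    · have hcount := hmult.add_eq_one v w habove
      rw [succ_pow_mul_pow _ (by omega), add_assoc, ← hdelay v w habove]
      simp only [gradedQuiver, if_neg hbelow, if_pos habove, pow_zero, pow_one, one_mul]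
    · simp [gradedQuiver, hbelow, habove, hmult.eq_zero w v hbelow habove,
        hmult.eq_zero v w habove hbelow]

/-- The product of the sequences of a frieze at all vertices of height `k`. -/
def levelProd (height : V → ℕ) (Y : V → ℕ → R) (k s : ℕ) : R :=
  ∏ w with height w = k, Y w s

theorem prod_pow_gradedQuiver_left (Y : V → ℕ → R) {v : V} {k : ℕ} (hv : height v = k + 1)
    (s : ℕ) : ∏ w, Y w s ^ gradedQuiver height w v = levelProd height Y k s := by
  simp [gradedQuiver, levelProd, Finset.prod_filter, pow_ite, hv, eq_comm]

theorem prod_pow_gradedQuiver_right (Y : V → ℕ → R) (v : V) (s : ℕ) :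
    ∏ w, Y w s ^ gradedQuiver height v w = levelProd height Y (height v + 1) s := by
  simp [gradedQuiver, levelProd, Finset.prod_filter, pow_ite]

namespace IsFrieze

variable {Y : V → ℕ → R}

theorem mul_eq_of_height_eq_zero (hY : IsFrieze (gradedQuiver height) Y) {v : V}
    (hv : height v = 0) (s : ℕ) : Y v (s + 1) * Y v s = 1 + levelProd height Y 1 s := by
  rw [hY, prod_pow_gradedQuiver_right, hv, zero_add]
  simp [gradedQuiver, hv]

theorem mul_eq_of_height_eq_succ (hY : IsFrieze (gradedQuiver height) Y) {v : V} {k : ℕ}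
    (hv : height v = k + 1) (s : ℕ) : Y v (s + 1) * Y v s =
      1 + levelProd height Y k (s + 1) * levelProd height Y (k + 2) s := by
  rw [hY, prod_pow_gradedQuiver_right, prod_pow_gradedQuiver_left Y hv, hv]

end IsFrieze

end Frieze

section DTilde

variable {n : ℕ}

/-- The height of a vertex of `D̃_n` in its linear orientation, in which the leaves `0, 1` are the
sources and the leaves `n - 1, n` the sinks. The subtraction `i - 1` is truncated at `i = 0`. -/
def dTildeHeight (n i : ℕ) : ℕ := min (i - 1) (n - 2)

theorem dTildeEdge_iff (hn : 4 ≤ n) {i j : ℕ} (hi : i ≤ n) (hj : j ≤ n) :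
    dTildeEdge n i j ↔ dTildeHeight n j = dTildeHeight n i + 1 := by
  simp only [dTildeEdge, dTildeHeight]
  omega

theorem isGradedOrientation_dTilde (hn : 4 ≤ n) {mult : Fin (n + 1) → Fin (n + 1) → ℕ}
    (hedge : ∀ u v : Fin (n + 1), dTildeEdge n u v → mult u v + mult v u = 1)
    (hnonedge : ∀ u v : Fin (n + 1), ¬ dTildeEdge n u v → ¬ dTildeEdge n v u → mult u v = 0) :
    IsGradedOrientation (fun v : Fin (n + 1) => dTildeHeight n v) mult := by
  have hiff : ∀ u v : Fin (n + 1),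
      dTildeEdge n u v ↔ dTildeHeight n v = dTildeHeight n u + 1 := fun u v =>
    dTildeEdge_iff hn u.is_le v.is_le
  simp only [hiff] at hedge hnonedge
  exact ⟨hedge, hnonedge⟩

theorem exists_dTildePotential {A : Type*} [AddCommMonoid A] (hn : 4 ≤ n) (d : ℕ → ℕ → A) :
    ∃ g : ℕ → A, ∀ i j, dTildeEdge n i j → g j = g i + d i j := by
  -- Starting from `G 2 = d 0 2 + d 1 2` leaves room for the values at `0` and `1`, as `A` has no
  -- subtraction.
  let G : ℕ → A := fun i => d 0 2 + d 1 2 + ∑ k ∈ Finset.Ico 2 i, d k (k + 1)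
  have hG : ∀ i, 2 ≤ i → G (i + 1) = G i + d i (i + 1) := fun i hi => by
    simp only [G, Finset.sum_Ico_succ_top hi, add_assoc]
  refine ⟨fun i => if i = 0 then d 1 2 else if i = 1 then d 0 2 else
    if i = n then G (n - 2) + d (n - 2) n else G i, ?_⟩
  rintro i j (⟨rfl, rfl⟩ | ⟨rfl, rfl⟩ | ⟨hi, hin, rfl⟩ | ⟨rfl, rfl⟩ | ⟨rfl, rfl⟩)
  · have : 2 ≠ n := by omega
    simp [this, G, add_comm]
  · have : 2 ≠ n := by omega
    simp [this, G]
  · grind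
  · have := hG (n - 2) (by omega)
    grind
  · grind

theorem exists_isDelay_dTilde (hn : 4 ≤ n) (mult : Fin (n + 1) → Fin (n + 1) → ℕ) :
    ∃ delay, IsDelay (fun v : Fin (n + 1) => dTildeHeight n v) mult delay := by
  obtain ⟨g, hg⟩ := exists_dTildePotential hn fun i j => mult (Fin.ofNat (n + 1) j) (Fin.ofNat _ i)
  refine ⟨fun v => g v, fun u v huv => ?_⟩
  simpa using hg u v ((dTildeEdge_iff hn u.is_le v.is_le).mpr huv)

theorem IsFrieze.ne_zero_dTilde (hn : 4 ≤ n) {mult : Fin (n + 1) → Fin (n + 1) → ℕ}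
    (hedge : ∀ u v : Fin (n + 1), dTildeEdge n u v → mult u v + mult v u = 1)
    (hnonedge : ∀ u v : Fin (n + 1), ¬ dTildeEdge n u v → ¬ dTildeEdge n v u → mult u v = 0)
    {R K : Type*} [CommRing R] [PartialOrder R] [IsStrictOrderedRing R] [CommRing K]
    [Algebra (MvPolynomial (Fin (n + 1)) R) K] [FaithfulSMul (MvPolynomial (Fin (n + 1)) R) K]
    {X : Fin (n + 1) → ℕ → K}
    (hX0 : ∀ v, X v 0 = algebraMap (MvPolynomial (Fin (n + 1)) R) K (MvPolynomial.X v))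
    (hX : IsFrieze mult X) (v : Fin (n + 1)) (j : ℕ) : X v j ≠ 0 := by
  have hmult := isGradedOrientation_dTilde hn hedge hnonedge
  obtain ⟨delay, hdelay⟩ := exists_isDelay_dTilde hn mult
  have hinit : ∀ v, X v 0 ∈ positiveFractions K (MvPolynomial.eval fun _ => (1 : R)) := fun v => by
    rw [hX0]
    exact positiveFractions.algebraMap_mem (by simp)
  exact positiveFractions.ne_zero (hX.mem_positiveFractions (hmult.wellFounded hdelay) hinit v j)

variable {l : ℕ} {R : Type*} [CommSemiring R] (Y : Fin (l + 4 + 1) → ℕ → R)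

/-- The products of the sequences of a frieze over the levels of `D̃_{l + 4}`, ordered by height. -/
abbrev dTildeRows : ℕ → ℕ → R := levelProd (fun v : Fin (l + 4 + 1) => dTildeHeight (l + 4) v) Y

theorem dTildeRows_zero : dTildeRows Y 0 = Y 0 * Y 1 := by
  have hlevel : ({w : Fin (l + 4 + 1) | dTildeHeight (l + 4) w = 0} : Finset _) = {0, 1} := by
    ext w
    rw [Finset.mem_filter_univ, Finset.mem_insert, Finset.mem_singleton, Fin.ext_iff, Fin.ext_iff]
    simp only [dTildeHeight, Fin.val_zero, Fin.val_one]
    omega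
  funext s
  simp [levelProd, hlevel]

theorem dTildeRows_of_eq_succ {v : Fin (l + 4 + 1)} {k : ℕ} (hk : 1 ≤ k) (hkl : k ≤ l + 1)
    (hv : (v : ℕ) = k + 1) : dTildeRows Y k = Y v := by
  have hlevel : ({w : Fin (l + 4 + 1) | dTildeHeight (l + 4) w = k} : Finset _) = {v} := by
    ext w
    rw [Finset.mem_filter_univ, Finset.mem_singleton, Fin.ext_iff, dTildeHeight]
    omega
  funext s
  simp [levelProd, hlevel]

theorem dTildeRows_top :
    dTildeRows Y (l + 2) = Y (Fin.last (l + 3)).castSucc * Y (Fin.last (l + 4)) := by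
  have hlevel : ({w : Fin (l + 4 + 1) | dTildeHeight (l + 4) w = l + 2} : Finset _) =
      {(Fin.last (l + 3)).castSucc, Fin.last (l + 4)} := by
    ext w
    rw [Finset.mem_filter_univ, Finset.mem_insert, Finset.mem_singleton, Fin.ext_iff, Fin.ext_iff]
    simp only [dTildeHeight, Fin.val_castSucc, Fin.val_last]
    omega
  funext s
  simp [levelProd, hlevel, Fin.ext_iff]

theorem dTildeRows_above_top : dTildeRows Y (l + 3) = 1 := by
  funext s
  refine Finset.prod_eq_one fun w hw => absurd (Finset.mem_filter.mp hw).2 ?_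
  simp only [dTildeHeight]
  omega

namespace IsFrieze

variable {F : Type*} [Field F] {Y : Fin (l + 4 + 1) → ℕ → F}

theorem isDTildeStrip
    (hY : IsFrieze (gradedQuiver fun v : Fin (l + 4 + 1) => dTildeHeight (l + 4) v) Y)
    (hne : ∀ v s, Y v s ≠ 0) :
    IsDTildeStrip l (Y 0) (Y 1) (Y (Fin.last (l + 3)).castSucc) (Y (Fin.last (l + 4)))
      (dTildeRows Y) := by
  have hinner : ∀ k, 1 ≤ k → k ≤ l + 1 → ∃ v : Fin (l + 4 + 1),
      dTildeHeight (l + 4) v = k ∧ dTildeRows Y k = Y v := fun k hk hkl =>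
    ⟨⟨k + 1, by omega⟩, by simp only [dTildeHeight]; omega, dTildeRows_of_eq_succ Y hk hkl rfl⟩
  have hmul : ∀ k s, k < l + 1 → dTildeRows Y (k + 1) (s + 1) * dTildeRows Y (k + 1) s =
      1 + dTildeRows Y k (s + 1) * dTildeRows Y (k + 2) s := fun k s hk => by
    obtain ⟨v, hv, hrow⟩ := hinner (k + 1) (by omega) (by omega)
    rw [hrow]
    exact hY.mul_eq_of_height_eq_succ hv s
  have htop : ∀ v : Fin (l + 4 + 1), dTildeHeight (l + 4) v = l + 2 → ∀ s,
      Y v (s + 1) * Y v s = 1 + dTildeRows Y (l + 1) (s + 1) := fun v hv s => by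
    simpa [dTildeRows_above_top] using hY.mul_eq_of_height_eq_succ hv s
  exact
    { tiling.ne_zero := fun k s hk hkl => by
        obtain ⟨v, -, hrow⟩ := hinner k hk hkl
        exact hrow ▸ hne v s
      tiling.mul_eq := hmul
      bottom := dTildeRows_zero Y
      top := dTildeRows_top Y
      bottom_fork.left_ne_zero := hne _
      bottom_fork.right_ne_zero := hne _
      bottom_fork.left_mul := hY.mul_eq_of_height_eq_zero (by simp [dTildeHeight])
      bottom_fork.right_mul := hY.mul_eq_of_height_eq_zero (by simp [dTildeHeight])
      bottom_fork.center_mul := fun s => by simpa [dTildeRows_zero] using hmul 0 s l.succ_pos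
      top_fork.left_ne_zero := hne _
      top_fork.right_ne_zero := hne _
      top_fork.left_mul := htop _ (by simp [dTildeHeight])
      top_fork.right_mul := htop _ (by simp [dTildeHeight])
      top_fork.center_mul := fun s => by
        rw [hmul l (s + 1) l.lt_succ_self, dTildeRows_top, Pi.mul_apply]
        ring }

theorem isRecurrent_dTilde
    (hY : IsFrieze (gradedQuiver fun v : Fin (l + 4 + 1) => dTildeHeight (l + 4) v) Y)
    (hne : ∀ v s, Y v s ≠ 0) (v : Fin (l + 4 + 1)) : IsRecurrent (Y v) := by
  have hstrip := hY.isDTildeStrip hne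
  obtain hv | hv | hv | hv | ⟨k, hk, hkl, hv⟩ : v = 0 ∨ v = 1 ∨
      v = (Fin.last (l + 3)).castSucc ∨ v = Fin.last (l + 4) ∨
      ∃ k, 1 ≤ k ∧ k ≤ l + 1 ∧ (v : ℕ) = k + 1 := by
    simp only [Fin.ext_iff, Fin.val_zero, Fin.val_one, Fin.val_castSucc, Fin.val_last]
    by_cases hinner : 2 ≤ (v : ℕ) ∧ (v : ℕ) ≤ l + 2
    · exact .inr <| .inr <| .inr <| .inr ⟨v - 1, by omega⟩
    · omega
  · exact hv ▸ hstrip.isRecurrent_bottom_left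
  · exact hv ▸ hstrip.isRecurrent_bottom_right
  · exact hv ▸ hstrip.isRecurrent_top_left
  · exact hv ▸ hstrip.isRecurrent_top_right
  · exact dTildeRows_of_eq_succ Y hk hkl hv ▸ hstrip.isRecurrent_row hkl

end IsFrieze

end DTilde

theorem stmt_1_general {F : Type*} [Field F] (n : ℕ) (hn : 4 ≤ n)
    (mult : Fin (n + 1) → Fin (n + 1) → ℕ)
    (hedge : ∀ u v : Fin (n + 1), dTildeEdge n u v → mult u v + mult v u = 1)
    (hnonedge : ∀ u v : Fin (n + 1), ¬ dTildeEdge n u v → ¬ dTildeEdge n v u → mult u v = 0)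
    (X : Fin (n + 1) → ℕ → F) (hXne : ∀ v j, X v j ≠ 0)
    (hXrec : ∀ v j, X v (j + 1) * X v j =
      1 + (∏ s, X s (j + 1) ^ mult s v) * ∏ d, X d j ^ mult v d) (i : Fin (n + 1)) :
    ∃ s : ℕ, 1 ≤ s ∧ ∃ coeff : Fin s → F,
      ∀ j : ℕ, X i (j + s) = ∑ t : Fin s, coeff t * X i (j + t) := by
  obtain ⟨l, rfl⟩ := Nat.exists_eq_add_of_le' hn
  have hmult := isGradedOrientation_dTilde hn hedge hnonedge
  obtain ⟨delay, hdelay⟩ := exists_isDelay_dTilde hn mult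
  have hY := IsFrieze.comp_delay hXrec hmult hdelay
  have hrec : IsRecurrent (X i) :=
    .of_comp_add (hY.isRecurrent_dTilde (fun v s => hXne v (s + delay v)) i)
  obtain ⟨E, horder, hE⟩ := hrec.exists_isSolution
  exact ⟨E.order, horder, E.coeffs, hE⟩

/-- Let `n ≥ 4` and let `Q` be any orientation of D̃_n, encoded by the arrow
multiplicity function `mult` : for each edge `{u,v}` there is exactly one arrow between
`u` and `v` (in one of the two directions), and there are no other arrows. Then every
frieze sequence `(X^i_j)_j` in `ℚ(x_0,…,x_n)` satisfies a linear recurrence. -/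
theorem stmt_1 (n : ℕ) (hn : 4 ≤ n)
    (mult : Fin (n+1) → Fin (n+1) → ℕ)   -- number of arrows from `u` to `v`
    (hedge : ∀ u v : Fin (n+1), dTildeEdge n u.val v.val → mult u v + mult v u = 1)
    (hnonedge : ∀ u v : Fin (n+1),
      ¬ dTildeEdge n u.val v.val → ¬ dTildeEdge n v.val u.val → mult u v = 0)
    -- the frieze sequences
    (X : Fin (n+1) → ℕ → FractionRing (MvPolynomial (Fin (n+1)) ℚ))
    (hX0 : ∀ v, X v 0 = algebraMap (MvPolynomial (Fin (n+1)) ℚ)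
      (FractionRing (MvPolynomial (Fin (n+1)) ℚ)) (MvPolynomial.X v))
    (hXrec : ∀ v (j : ℕ), X v (j+1) * X v j =
      1 + (∏ s : Fin (n+1), X s (j+1) ^ mult s v) * (∏ d : Fin (n+1), X d j ^ mult v d)) :
    -- every frieze sequence satisfies a linear recurrence
    ∀ i : Fin (n+1), ∃ s : ℕ, 1 ≤ s ∧
      ∃ coeff : Fin s → FractionRing (MvPolynomial (Fin (n+1)) ℚ),
        ∀ j : ℕ, X i (j + s) = ∑ t : Fin s, coeff t * X i (j + t.val) :=
  stmt_1_general n hn mult hedge hnonedge X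
    (IsFrieze.ne_zero_dTilde hn hedge hnonedge hX0 hXrec) hXrec
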